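/- arXiv:2311.07770 — 3 statements merged into one kernel-verified Lean document; each statement's English description precedes it below -/
import Mathlib

section
/- Let S be a nonnegative random variable with E[S²] < ∞ and fix x > 0. Define m(r) := (1 − S̃(r·x)) / ( r·S̃(r·x) ) for r > 0. Then m(r) → x·E[S] as r → 0⁺, and moreover lim_{r→0⁺} ( m(r) − x·E[S] ) / r = x²·( E[S]² − E[S²]/2 ). In other words, the mean service time under Poissonian resetting at a small rate δr satisfies m(δr) = x·E[S] + δr·x²·( E[S]² − E[S²]/2 ) + o(δr). -/
open MeasureTheory ProbabilityTheory Real Filter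

lemma aux_bound (t : ℝ) (ht : 0 ≤ t) : |Real.exp (-t) - 1 + t| ≤ t ^ 2 := by
  rcases le_total t 1 with h | h
  · have := Real.abs_exp_sub_one_sub_id_le (x := -t) (by rw [abs_neg, abs_of_nonneg ht]; exact h)
    simpa using this
  · have h1 := Real.add_one_le_exp (-t)
    have h2 : Real.exp (-t) ≤ 1 := Real.exp_le_one_iff.2 (by linarith)
    rw [abs_of_nonneg (by linarith)]
    nlinarith

lemma aux_pointwise (s : ℝ) (hs : 0 ≤ s) :
    Tendsto (fun u : ℝ => (Real.exp (-(u * s)) - 1 + u * s) / u ^ 2)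
      (nhdsWithin 0 (Set.Ioi 0)) (nhds (s ^ 2 / 2)) := by
  have hid : Tendsto (fun u : ℝ => u) (nhdsWithin 0 (Set.Ioi 0)) (nhds 0) :=
    tendsto_id.mono_left nhdsWithin_le_nhds
  rw [tendsto_iff_dist_tendsto_zero]
  have hb : Tendsto (fun u : ℝ => u * s ^ 3) (nhdsWithin 0 (Set.Ioi 0)) (nhds 0) := by
    simpa using hid.mul_const (s ^ 3)
  have hus : Tendsto (fun u : ℝ => u * s) (nhdsWithin 0 (Set.Ioi 0)) (nhds 0) := by
    simpa using hid.mul_const s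
  refine squeeze_zero' (Eventually.of_forall fun _ => dist_nonneg) ?_ hb
  filter_upwards [hus.eventually (gt_mem_nhds one_pos), self_mem_nhdsWithin] with u hu hu0
  have hu0 : 0 < u := hu0
  have h0 : 0 ≤ u * s := by positivity
  have := Real.exp_bound (x := -(u * s)) (by rw [abs_neg, abs_of_nonneg h0]; exact hu.le)
    (n := 3) (by norm_num)
  simp only [Finset.sum_range_succ, Finset.sum_range_zero, abs_neg, abs_of_nonneg h0] at this
  norm_num [Nat.factorial] at this
  rw [Real.dist_eq]
  have e : (Real.exp (-(u * s)) - 1 + u * s) / u ^ 2 - s ^ 2 / 2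
      = (Real.exp (-(u * s)) - (1 + -(u * s) + (u * s) ^ 2 / 2)) / u ^ 2 := by
    field_simp
    ring
  rw [e, abs_div, abs_of_pos (by positivity : 0 < u ^ 2), div_le_iff₀ (by positivity)]
  have h3 : 0 ≤ (u * s) ^ 3 := by positivity
  calc _ ≤ (u * s) ^ 3 * (2 / 9) := by simpa using this
    _ ≤ (u * s) ^ 3 := by linarith
    _ = _ := by ring

/-- **Small-rate expansion of the mean service time, multiplicative model.**
With `m(r) = (1 − S̃(rx))/(r·S̃(rx))`, one has `m(r) → x·E[S]` as `r → 0⁺`, and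
`(m(r) − x·E[S])/r → x²·(E[S]² − E[S²]/2)` as `r → 0⁺`; that is,
`m(δr) = x·E[S] + δr·x²·(E[S]² − E[S²]/2) + o(δr)`. -/
theorem multiplicative_mean_small_rate_expansion
    {Ω : Type*} [MeasurableSpace Ω] {P : Measure Ω} [IsProbabilityMeasure P]
    (S : Ω → ℝ) (hSmeas : Measurable S) (hSnn : ∀ ω, 0 ≤ S ω)
    (hS2 : Integrable (fun ω => S ω ^ 2) P)
    (x : ℝ) (hx : 0 < x)
    (Stilde : ℝ → ℝ)
    (hSt : ∀ u : ℝ, Stilde u = ∫ ω, Real.exp (-(u * S ω)) ∂P)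
    (m : ℝ → ℝ)
    (hm : ∀ r : ℝ, 0 < r → m r = (1 - Stilde (r * x)) / (r * Stilde (r * x))) :
    Tendsto m (nhdsWithin 0 (Set.Ioi 0)) (nhds (x * ∫ ω, S ω ∂P)) ∧
    Tendsto (fun r => (m r - x * ∫ ω, S ω ∂P) / r) (nhdsWithin 0 (Set.Ioi 0))
      (nhds (x ^ 2 * ((∫ ω, S ω ∂P) ^ 2 - (∫ ω, S ω ^ 2 ∂P) / 2))) := by
  have hS1 : Integrable S P := by
    have : MemLp S 2 P := (memLp_two_iff_integrable_sq hSmeas.aestronglyMeasurable).2 hS2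
    exact this.integrable (by norm_num)
  have hid : Tendsto (fun u : ℝ => u) (nhdsWithin 0 (Set.Ioi 0)) (nhds 0) :=
    tendsto_id.mono_left nhdsWithin_le_nhds
  have hexp : ∀ u : ℝ, 0 < u → Integrable (fun ω => Real.exp (-(u * S ω))) P := by
    intro u hu
    refine Integrable.of_bound (C := 1) (by fun_prop) (Eventually.of_forall fun ω => ?_)
    rw [Real.norm_eq_abs, abs_of_pos (Real.exp_pos _)]
    exact Real.exp_le_one_iff.2 (by have := mul_nonneg hu.le (hSnn ω); linarith)
  obtain ⟨q, hq⟩ : ∃ q : ℝ → ℝ, q = fun u =>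
      ∫ ω, (Real.exp (-(u * S ω)) - 1 + u * S ω) / u ^ 2 ∂P := ⟨_, rfl⟩
  have hqlim : Tendsto q (nhdsWithin 0 (Set.Ioi 0)) (nhds ((∫ ω, S ω ^ 2 ∂P) / 2)) := by
    rw [hq, ← integral_div]
    refine tendsto_integral_filter_of_dominated_convergence (fun ω => S ω ^ 2)
      (Eventually.of_forall fun u => by fun_prop) ?_ hS2
      (Eventually.of_forall fun ω => aux_pointwise _ (hSnn ω))
    filter_upwards [self_mem_nhdsWithin] with u hu
    have hu : 0 < u := hu
    refine Eventually.of_forall fun ω => ?_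
    rw [Real.norm_eq_abs, abs_div, abs_of_pos (by positivity : 0 < u ^ 2),
      div_le_iff₀ (by positivity)]
    have := aux_bound (u * S ω) (mul_nonneg hu.le (hSnn ω))
    linarith [mul_pow u (S ω) 2]
  set μ := ∫ ω, S ω ∂P with hμ
  set E := ∫ ω, S ω ^ 2 ∂P with hE
  have hSq : ∀ u : ℝ, 0 < u → Stilde u = 1 - u * μ + u ^ 2 * q u := by
    intro u hu
    have hsub : Integrable (fun ω => Real.exp (-(u * S ω)) - 1) P :=
      (hexp u hu).sub (integrable_const _)
    have h1 : q u = (Stilde u - 1 + u * μ) / u ^ 2 := by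
      rw [hq, hSt, hμ]
      simp only
      rw [integral_div, integral_add hsub (hS1.const_mul u),
        integral_sub (hexp u hu) (integrable_const _), integral_const_mul]
      simp
    rw [h1]
    field_simp
    ring
  have hu : Tendsto (fun r : ℝ => r * x) (nhdsWithin 0 (Set.Ioi 0))
      (nhdsWithin 0 (Set.Ioi 0)) := by
    refine tendsto_nhdsWithin_iff.2 ⟨by simpa using hid.mul_const x, ?_⟩
    filter_upwards [self_mem_nhdsWithin] with r hr
    exact mul_pos hr hx
  have hu0 : Tendsto (fun r : ℝ => r * x) (nhdsWithin 0 (Set.Ioi 0)) (nhds 0) :=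
    hu.mono_right nhdsWithin_le_nhds
  have hQ := hqlim.comp hu
  have hT : Tendsto (fun r => Stilde (r * x)) (nhdsWithin 0 (Set.Ioi 0)) (nhds 1) := by
    have h : Tendsto (fun r => 1 - (r * x) * μ + (r * x) ^ 2 * q (r * x))
        (nhdsWithin 0 (Set.Ioi 0)) (nhds (1 - 0 * μ + 0 ^ 2 * (E / 2))) :=
      (tendsto_const_nhds.sub (hu0.mul_const μ)).add ((hu0.pow 2).mul hQ)
    have h' := h.congr' (f₂ := fun r => Stilde (r * x)) (by
      filter_upwards [self_mem_nhdsWithin] with r hr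
      exact (hSq _ (mul_pos hr hx)).symm)
    simpa using h'
  have hTpos : ∀ᶠ r in nhdsWithin (0 : ℝ) (Set.Ioi 0), 0 < Stilde (r * x) :=
    hT.eventually (lt_mem_nhds one_pos)
  have main : Tendsto (fun r => (m r - x * μ) / r) (nhdsWithin 0 (Set.Ioi 0))
      (nhds (x ^ 2 * (μ ^ 2 - E / 2))) := by
    have h : Tendsto (fun r => x ^ 2 * (μ ^ 2 - q (r * x) + (r * x) * (q (r * x) * -μ))
        / Stilde (r * x)) (nhdsWithin 0 (Set.Ioi 0))
        (nhds (x ^ 2 * (μ ^ 2 - E / 2 + 0 * (E / 2 * -μ)) / 1)) :=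
      (((tendsto_const_nhds.sub hQ).add (hu0.mul (hQ.mul_const (-μ)))).const_mul (x ^ 2)).div hT
        one_ne_zero
    have h' := h.congr' (f₂ := fun r => (m r - x * μ) / r) (by
      filter_upwards [self_mem_nhdsWithin, hTpos] with r hr hp
      have hr : 0 < r := hr
      have hs := hSq _ (mul_pos hr hx)
      rw [hm r hr]
      have hr' := hr.ne'
      have hp' := hp.ne'
      generalize Stilde (r * x) = T at *
      generalize q (r * x) = Q at *
      field_simp
      subst hs
      ring)
    simpa using h'
  refine ⟨?_, main⟩
  have h := (hid.mul main).const_add (x * μ)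
  rw [zero_mul, add_zero] at h
  refine h.congr' ?_
  filter_upwards [self_mem_nhdsWithin] with r hr
  have hr' : r ≠ 0 := ne_of_gt hr
  field_simp
  ring
end

section
/- Let S be a nonnegative random variable with 0 < E[S] < ∞ and E[S²] < ∞, and fix a job size x > 0. If the coefficient of variation of S exceeds 1, i.e. E[S²] > 2·E[S]² (equivalently Var(S) > E[S]²), then there exists a resetting rate r > 0 for which the mean service time under Poissonian resetting is strictly smaller than without resetting: (1 − S̃(r·x)) / ( r·S̃(r·x) ) < x·E[S]. -/
open MeasureTheory ProbabilityTheory Real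

lemma exp_lower_aux (t : ℝ) (ht : 0 ≤ t) :
    1 - t + t ^ 2 / 2 * Real.exp (-t) ≤ Real.exp (-t) := by
  have hd : ∀ y : ℝ, HasDerivAt (fun y : ℝ => 1 - y ^ 2 / 2 - (1 - y) * Real.exp y)
      (y * (Real.exp y - 1)) y := by
    intro y
    have h1 : HasDerivAt (fun y : ℝ => 1 - y ^ 2 / 2) (-y) y := by
      have := ((hasDerivAt_pow 2 y).div_const 2).const_sub 1
      exact this.congr_deriv (by norm_num)
    have h2 : HasDerivAt (fun y : ℝ => (1 - y) * Real.exp y)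
        ((-1) * Real.exp y + (1 - y) * Real.exp y) y :=
      ((hasDerivAt_id y).const_sub 1).mul (Real.hasDerivAt_exp y)
    exact (h1.sub h2).congr_deriv (by ring)
  have hm : MonotoneOn (fun y : ℝ => 1 - y ^ 2 / 2 - (1 - y) * Real.exp y) (Set.Ici 0) := by
    apply monotoneOn_of_deriv_nonneg (convex_Ici 0)
    · exact fun y _ => (hd y).continuousAt.continuousWithinAt
    · exact fun y _ => (hd y).differentiableAt.differentiableWithinAt
    · intro y hy
      rw [interior_Ici] at hy
      have hy' : 0 < y := hy
      rw [(hd y).deriv]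
      exact mul_nonneg hy'.le (by linarith [Real.add_one_le_exp y])
  have h := hm (Set.mem_Ici.2 le_rfl) (Set.mem_Ici.2 ht) ht
  simp only [Real.exp_zero] at h
  have he : Real.exp t * Real.exp (-t) = 1 := by rw [← Real.exp_add]; simp
  have h0 : 0 ≤ 1 - t ^ 2 / 2 - (1 - t) * Real.exp t := by norm_num at h; linarith
  have h3 := mul_nonneg h0 (Real.exp_pos (-t)).le
  have h4 : (1 - t ^ 2 / 2 - (1 - t) * Real.exp t) * Real.exp (-t)
      = Real.exp (-t) - t ^ 2 / 2 * Real.exp (-t) - (1 - t) * (Real.exp t * Real.exp (-t)) := by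
    ring
  rw [h4, he] at h3
  linarith

/-- **Multiplicative model: `CV_S > 1` makes resetting beneficial.**
If `E[S²] > 2·E[S]²` (i.e. the coefficient of variation of `S` exceeds 1),
then there exists a resetting rate `r > 0` with
`(1 − S̃(rx))/(r·S̃(rx)) < x·E[S]`, where `S̃(u) = E[e^{-uS}]`. -/
theorem multiplicative_cv_condition_beneficial
    {Ω : Type*} [MeasurableSpace Ω] {P : Measure Ω} [IsProbabilityMeasure P]
    (S : Ω → ℝ) (hSmeas : Measurable S) (hSnn : ∀ ω, 0 ≤ S ω)
    (hS1 : Integrable S P) (hS2 : Integrable (fun ω => S ω ^ 2) P)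
    (hSpos : 0 < ∫ ω, S ω ∂P)
    (hCV : ∫ ω, S ω ^ 2 ∂P > 2 * (∫ ω, S ω ∂P) ^ 2)
    (x : ℝ) (hx : 0 < x)
    (Stilde : ℝ → ℝ)
    (hSt : ∀ u : ℝ, Stilde u = ∫ ω, Real.exp (-(u * S ω)) ∂P) :
    ∃ r : ℝ, 0 < r ∧
      (1 - Stilde (r * x)) / (r * Stilde (r * x)) < x * ∫ ω, S ω ∂P := by
  set m := ∫ ω, S ω ∂P with hm
  have hle1 : ∀ u : ℝ, 0 < u → ∀ ω, Real.exp (-(u * S ω)) ≤ 1 := fun u hu ω =>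
    Real.exp_le_one_iff.2 (neg_nonpos.2 (mul_nonneg hu.le (hSnn ω)))
  have hb : ∀ u : ℝ, 0 < u → ∀ ω, ‖S ω ^ 2 * Real.exp (-(u * S ω))‖ ≤ S ω ^ 2 := by
    intro u hu ω
    rw [Real.norm_of_nonneg (by positivity)]
    exact mul_le_of_le_one_right (sq_nonneg _) (hle1 u hu ω)
  have hlim : Filter.Tendsto (fun u : ℝ => ∫ ω, S ω ^ 2 * Real.exp (-(u * S ω)) ∂P)
      (nhdsWithin 0 (Set.Ioi 0)) (nhds (∫ ω, S ω ^ 2 ∂P)) := by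
    apply tendsto_integral_filter_of_dominated_convergence (fun ω => S ω ^ 2)
    · exact Filter.Eventually.of_forall fun u => by
        apply Measurable.aestronglyMeasurable
        fun_prop
    · filter_upwards [self_mem_nhdsWithin] with u hu
      exact Filter.Eventually.of_forall (hb u hu)
    · exact hS2
    · refine Filter.Eventually.of_forall fun ω => ?_
      have hc : Continuous fun u : ℝ => S ω ^ 2 * Real.exp (-(u * S ω)) := by fun_prop
      have := hc.tendsto 0
      simp only [zero_mul, neg_zero, Real.exp_zero, mul_one] at this
      exact this.mono_left nhdsWithin_le_nhds
  obtain ⟨u, hq, hu⟩ := ((hlim.eventually (lt_mem_nhds hCV)).and self_mem_nhdsWithin).exists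
  have hu : 0 < u := hu
  have hi1 : Integrable (fun ω => S ω ^ 2 * Real.exp (-(u * S ω))) P :=
    hS2.mono' (by apply Measurable.aestronglyMeasurable; fun_prop)
      (Filter.Eventually.of_forall (hb u hu))
  have hi2 : Integrable (fun ω => Real.exp (-(u * S ω))) P :=
    (integrable_const (1 : ℝ)).mono' (by apply Measurable.aestronglyMeasurable; fun_prop)
      (Filter.Eventually.of_forall fun ω => by
        rw [Real.norm_of_nonneg (Real.exp_pos _).le]; exact hle1 u hu ω)
  set q := ∫ ω, S ω ^ 2 * Real.exp (-(u * S ω)) ∂P with hqd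
  have hL : 1 - u * m + u ^ 2 / 2 * q ≤ Stilde u := by
    have hA : Integrable (fun ω => 1 - u * S ω) P := (integrable_const (1 : ℝ)).sub (hS1.const_mul u)
    have hB := hi1.const_mul (u ^ 2 / 2)
    have e : ∫ ω, ((1 - u * S ω) + u ^ 2 / 2 * (S ω ^ 2 * Real.exp (-(u * S ω)))) ∂P
        = 1 - u * m + u ^ 2 / 2 * q := by
      rw [integral_add hA hB, integral_sub (integrable_const (1 : ℝ)) (hS1.const_mul u),
        integral_const_mul, integral_const_mul]
      simp [hm, hqd]
    rw [hSt, ← e]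
    refine integral_mono (hA.add hB) hi2 fun ω => ?_
    have := exp_lower_aux (u * S ω) (mul_nonneg hu.le (hSnn ω))
    calc _ = 1 - u * S ω + (u * S ω) ^ 2 / 2 * Real.exp (-(u * S ω)) := by ring
      _ ≤ _ := this
  have hkey : 1 < Stilde u * (1 + u * m) := by
    have hum : 0 < u * m := mul_pos hu hSpos
    have h1 : (1 - u * m + u ^ 2 / 2 * q) * (1 + u * m) ≤ Stilde u * (1 + u * m) :=
      mul_le_mul_of_nonneg_right hL (by linarith)
    have h2 : 0 < u ^ 2 / 2 * (q - 2 * m ^ 2) := mul_pos (by positivity) (by linarith)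
    have h3 : 0 < u ^ 2 / 2 * q * (u * m) :=
      mul_pos (mul_pos (by positivity) (lt_trans (by positivity) hq)) hum
    nlinarith
  have hLpos : 0 < Stilde u := by
    have hum : 0 < u * m := mul_pos hu hSpos
    by_contra hn
    nlinarith [not_lt.1 hn]
  refine ⟨u / x, div_pos hu hx, ?_⟩
  rw [div_mul_cancel₀ u hx.ne', div_lt_iff₀ (mul_pos (div_pos hu hx) hLpos)]
  have : x * m * (u / x * Stilde u) = u * m * Stilde u := by field_simp
  rw [this]
  linarith
end

section
/- Let S be a nonnegative random variable with E[S²] < ∞ and fix x > 0. Define m(r) := ( e^{r·x} − S̃(r) ) / ( r·S̃(r) ) for r > 0. Then m(r) → x + E[S] as r → 0⁺, and moreover lim_{r→0⁺} ( m(r) − (x + E[S]) ) / r = x·E[S] + E[S]² + ( x² − E[S²] )/2. In other words, the mean service time under Poissonian resetting at a small rate δr satisfies m(δr) = x + E[S] + δr·( x·E[S] + E[S]² + (x² − E[S²])/2 ) + o(δr). -/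
open MeasureTheory ProbabilityTheory Real Filter

lemma aux_exp (a : ℝ) :
    Tendsto (fun r : ℝ => (Real.exp (r * a) - 1 - r * a) / r ^ 2) (nhdsWithin 0 (Set.Ioi 0))
      (nhds (a ^ 2 / 2)) := by
  have h0 : Tendsto (fun x : ℝ => (Real.exp x - ∑ i ∈ Finset.range (2 + 1), x ^ i / (i.factorial : ℝ)) / x ^ 2)
      (nhds 0) (nhds 0) :=
    (Real.exp_sub_sum_range_succ_isLittleO_pow 2).tendsto_div_nhds_zero
  have h1 : Tendsto (fun r : ℝ => r * a) (nhdsWithin 0 (Set.Ioi 0)) (nhds 0) := by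
    have : Tendsto (fun r : ℝ => r * a) (nhds 0) (nhds (0 * a)) :=
      (continuous_id.mul continuous_const).tendsto 0
    rw [zero_mul] at this
    exact this.mono_left nhdsWithin_le_nhds
  have h2 := ((h0.comp h1).mul_const (a ^ 2)).add_const (a ^ 2 / 2)
  rw [zero_mul, zero_add] at h2
  refine h2.congr' ?_
  filter_upwards [self_mem_nhdsWithin] with r hr
  have hr' : r ≠ 0 := ne_of_gt hr
  by_cases ha : a = 0
  · simp [ha]
  · simp only [Function.comp, Finset.sum_range_succ, Finset.sum_range_zero, Nat.factorial]
    field_simp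
    norm_num
    ring

/-- **Small-rate expansion of the mean service time, additive model.**
With `m(r) = (e^{rx} − S̃(r))/(r·S̃(r))`, one has `m(r) → x + E[S]` as `r → 0⁺`, and
`(m(r) − (x + E[S]))/r → x·E[S] + E[S]² + (x² − E[S²])/2` as `r → 0⁺`; that is,
`m(δr) = x + E[S] + δr·(x·E[S] + E[S]² + (x² − E[S²])/2) + o(δr)`. -/
theorem additive_mean_small_rate_expansion
    {Ω : Type*} [MeasurableSpace Ω] {P : Measure Ω} [IsProbabilityMeasure P]
    (S : Ω → ℝ) (hSmeas : Measurable S) (hSnn : ∀ ω, 0 ≤ S ω)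
    (hS2 : Integrable (fun ω => S ω ^ 2) P)
    (x : ℝ) (hx : 0 < x)
    (Stilde : ℝ → ℝ)
    (hSt : ∀ u : ℝ, Stilde u = ∫ ω, Real.exp (-(u * S ω)) ∂P)
    (m : ℝ → ℝ)
    (hm : ∀ r : ℝ, 0 < r → m r = (Real.exp (r * x) - Stilde r) / (r * Stilde r)) :
    Tendsto m (nhdsWithin 0 (Set.Ioi 0)) (nhds (x + ∫ ω, S ω ∂P)) ∧
    Tendsto (fun r => (m r - (x + ∫ ω, S ω ∂P)) / r) (nhdsWithin 0 (Set.Ioi 0))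
      (nhds (x * (∫ ω, S ω ∂P) + (∫ ω, S ω ∂P) ^ 2
        + (x ^ 2 - ∫ ω, S ω ^ 2 ∂P) / 2)) := by
  set E := ∫ ω, S ω ∂P with hE
  have hS1 : Integrable S P := by
    have : MemLp S 2 P := (memLp_two_iff_integrable_sq hSmeas.aestronglyMeasurable).2 hS2
    exact this.integrable (by norm_num)
  set l := nhdsWithin (0 : ℝ) (Set.Ioi 0) with hl
  have hid : Tendsto (fun r : ℝ => r) l (nhds 0) := nhdsWithin_le_nhds
  have hexpint : ∀ r : ℝ, 0 < r → Integrable (fun ω => Real.exp (-(r * S ω))) P := by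
    intro r hr
    refine Integrable.of_bound (C := 1) (by fun_prop) (ae_of_all _ fun ω => ?_)
    rw [Real.norm_eq_abs, abs_of_pos (Real.exp_pos _)]
    exact Real.exp_le_one_iff.2 (by have := mul_nonneg hr.le (hSnn ω); linarith)
  have hpos : ∀ r : ℝ, 0 < r → 0 < Stilde r := by
    intro r hr
    rw [hSt]
    exact integral_exp_pos (hexpint r hr)
  have hq : Tendsto (fun r => (Stilde r - 1 + r * E) / r ^ 2) l
      (nhds ((∫ ω, S ω ^ 2 ∂P) / 2)) := by
    have hd : Tendsto (fun r => ∫ ω, (Real.exp (-(r * S ω)) - 1 + r * S ω) / r ^ 2 ∂P) l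
        (nhds (∫ ω, S ω ^ 2 / 2 ∂P)) := by
      refine tendsto_integral_filter_of_dominated_convergence (fun ω => S ω ^ 2) ?_ ?_ hS2 ?_
      · exact Eventually.of_forall fun r => by fun_prop
      · filter_upwards [self_mem_nhdsWithin] with r hr
        refine ae_of_all _ fun ω => ?_
        have hr' : (0 : ℝ) < r := hr
        have := aux_bound (r * S ω) (mul_nonneg hr'.le (hSnn ω))
        rw [Real.norm_eq_abs, abs_div, abs_of_pos (pow_pos hr' 2), div_le_iff₀ (pow_pos hr' 2)]
        linarith [mul_pow r (S ω) 2]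
      · refine ae_of_all _ fun ω => ?_
        have := aux_exp (-(S ω))
        rw [neg_sq] at this
        refine this.congr fun r => ?_
        rw [mul_neg, sub_neg_eq_add]
    rw [integral_div] at hd
    refine hd.congr' ?_
    filter_upwards [self_mem_nhdsWithin] with r hr
    have hi := hexpint r hr
    have hi1 : Integrable (fun ω => Real.exp (-(r * S ω)) - 1) P := hi.sub (integrable_const _)
    rw [integral_div, integral_add hi1 (hS1.const_mul r),
      integral_sub hi (integrable_const _), integral_const_mul, hSt]
    simp [hE]
  have hp := aux_exp x
  set p := fun r : ℝ => (Real.exp (r * x) - 1 - r * x) / r ^ 2 with hpdef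
  set q := fun r : ℝ => (Stilde r - 1 + r * E) / r ^ 2 with hqdef
  have hSq : ∀ r : ℝ, 0 < r → Stilde r = 1 - r * E + r ^ 2 * q r := by
    intro r hr
    have := hr.ne'
    simp only [hqdef]; field_simp; ring
  have hep : ∀ r : ℝ, 0 < r → Real.exp (r * x) = 1 + r * x + r ^ 2 * p r := by
    intro r hr
    have := hr.ne'
    simp only [hpdef]; field_simp; ring
  have hS0 : Tendsto Stilde l (nhds 1) := by
    have h := ((hid.mul_const E).const_sub 1).add ((hid.pow 2).mul hq)
    have h' : Tendsto (fun r => 1 - r * E + r ^ 2 * q r) l (nhds 1) := by simpa using h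
    refine h'.congr' ?_
    filter_upwards [self_mem_nhdsWithin] with r hr
    exact (hSq r hr).symm
  have hmain : Tendsto (fun r => (m r - (x + E)) / r) l
      (nhds (x * E + E ^ 2 + (x ^ 2 - ∫ ω, S ω ^ 2 ∂P) / 2)) := by
    have h := ((hp.sub hq).sub (((hid.mul hq).sub_const E).const_mul (x + E))).div hS0 one_ne_zero
    have heq : (x ^ 2 / 2 - (∫ ω, S ω ^ 2 ∂P) / 2
        - (x + E) * (0 * ((∫ ω, S ω ^ 2 ∂P) / 2) - E)) / 1
        = x * E + E ^ 2 + (x ^ 2 - ∫ ω, S ω ^ 2 ∂P) / 2 := by ring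
    rw [heq] at h
    refine h.congr' ?_
    filter_upwards [self_mem_nhdsWithin] with r hr
    have hr' : r ≠ 0 := ne_of_gt hr
    have hs : Stilde r ≠ 0 := (hpos r hr).ne'
    simp only [Pi.div_apply]
    rw [hm r hr, div_sub' (mul_ne_zero hr' hs), div_div, div_eq_div_iff hs (by positivity), hep r hr,
      hSq r hr]
    ring
  refine ⟨?_, hmain⟩
  have h := (hid.mul hmain).const_add (x + E)
  rw [zero_mul, add_zero] at h
  refine h.congr' ?_
  filter_upwards [self_mem_nhdsWithin] with r hr
  have hr' : r ≠ 0 := ne_of_gt hr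
  field_simp
  ring
end
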